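/- arXiv:0712.2153 — 2 statements merged into one kernel-verified Lean document; each statement's English description precedes it below -/
import Mathlib

section
/- Let n ≥ 7. The assignment σ_i ↦ ∏_{j=1}^{i−1}(j, n+j) · (i, n+i+1, n+i, i+1) · ∏_{j=i+2}^{n}(j, n+j), for 1 ≤ i ≤ n−1, induces a well-defined group homomorphism ρ_{L2} : B_n → Sym_{2n}, and ρ_{L2} is transitive. -/
/-- The braid relations on `n-1` generators; generator `i : Fin (n-1)` stands for the
Artin generator `σ_{i+1}` (so the indexing is 0-based). The relations are
`σ_i σ_j = σ_j σ_i` for `|i-j| ≥ 2` and `σ_i σ_j σ_i = σ_j σ_i σ_j` for `|i-j| = 1`. -/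
def braidRels (n : ℕ) : Set (FreeGroup (Fin (n - 1))) :=
  { r | ∃ i j : Fin (n - 1), ((i : ℕ) + 2 ≤ (j : ℕ) ∨ (j : ℕ) + 2 ≤ (i : ℕ)) ∧
      r = FreeGroup.of i * FreeGroup.of j * (FreeGroup.of j * FreeGroup.of i)⁻¹ } ∪
  { r | ∃ i j : Fin (n - 1), (j : ℕ) = (i : ℕ) + 1 ∧
      r = FreeGroup.of i * FreeGroup.of j * FreeGroup.of i *
          (FreeGroup.of j * FreeGroup.of i * FreeGroup.of j)⁻¹ }

/-- The braid group `B_n`, given by the Artin presentation. -/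
abbrev BraidGroup (n : ℕ) := PresentedGroup (braidRels n)

/-- The Artin generator `σ_{i+1}` of the braid group `B_n`, for `i : Fin (n-1)`. -/
def σ {n : ℕ} (i : Fin (n - 1)) : BraidGroup n := PresentedGroup.of i

/-- A homomorphism to the symmetric group `Sym_k = Perm (Fin k)` is transitive if its
image acts transitively on the `k` points. -/
def IsTransitiveHom {G : Type*} [Group G] {k : ℕ} (φ : G →* Equiv.Perm (Fin k)) : Prop :=
  ∀ x y : Fin k, ∃ g : G, φ g x = y

/-- A homomorphism from `B_n` is cyclic if it sends all the generators `σ_1, …, σ_{n-1}`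
to a single element. -/
def IsCyclicHom {n : ℕ} {H : Type*} [Group H] (ψ : BraidGroup n →* H) : Prop :=
  ∀ i j : Fin (n - 1), ψ (σ i) = ψ (σ j)

/-- The transposition `(j, n+j)` (0-based) in `Sym_{2n}`. -/
def tw (n : ℕ) (j : Fin n) : Equiv.Perm (Fin (2 * n)) :=
  Equiv.swap ⟨j, by have := j.isLt; omega⟩ ⟨n + j, by have := j.isLt; omega⟩

/-- The 4-cycle `(a, b, c, d)` sending `a ↦ b ↦ c ↦ d ↦ a` (for pairwise distinct
points), written as the product of transpositions `(a d)(a c)(a b)`. -/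
def cyc4 {m : ℕ} (a b c d : Fin m) : Equiv.Perm (Fin m) :=
  Equiv.swap a d * Equiv.swap a c * Equiv.swap a b

/-- `ρ_{L1}(σ_{i+1})`: the 4-cycle `(i, n+i+1, n+i, i+1)` on the 0-based points of
`Sym_{2n}`, for `i : Fin (n-1)`. -/
def linL1Gen (n : ℕ) (i : Fin (n - 1)) : Equiv.Perm (Fin (2 * n)) :=
  cyc4 ⟨i, by have := i.isLt; omega⟩ ⟨n + i + 1, by have := i.isLt; omega⟩
    ⟨n + i, by have := i.isLt; omega⟩ ⟨(i : ℕ) + 1, by have := i.isLt; omega⟩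

/-- The product `∏_{j < i} (j, n+j)` (0-based) in `Sym_{2n}`. -/
def lowTw (n : ℕ) (i : Fin (n - 1)) : Equiv.Perm (Fin (2 * n)) :=
  ((List.finRange n).map (fun j : Fin n => if (j : ℕ) < (i : ℕ) then tw n j else 1)).prod

/-- The product `∏_{j ≥ i+2} (j, n+j)` (0-based) in `Sym_{2n}`. -/
def highTw (n : ℕ) (i : Fin (n - 1)) : Equiv.Perm (Fin (2 * n)) :=
  ((List.finRange n).map (fun j : Fin n => if (i : ℕ) + 2 ≤ (j : ℕ) then tw n j else 1)).prod

/-- `ρ_{L2}(σ_{i+1}) = ∏_{j<i}(j, n+j) · (i, n+i+1, n+i, i+1) · ∏_{j≥i+2}(j, n+j)`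
(0-based) in `Sym_{2n}`. -/
def linL2Gen (n : ℕ) (i : Fin (n - 1)) : Equiv.Perm (Fin (2 * n)) :=
  lowTw n i * linL1Gen n i * highTw n i

/-- `ρ_{L3}(σ_{i+1}) = ∏_{j<i}(j, n+j) · (i, n+i+1)(i+1, n+i) · ∏_{j≥i+2}(j, n+j)`
(0-based) in `Sym_{2n}`. -/
def linL3Gen (n : ℕ) (i : Fin (n - 1)) : Equiv.Perm (Fin (2 * n)) :=
  lowTw n i *
    (Equiv.swap ⟨i, by have := i.isLt; omega⟩ ⟨n + i + 1, by have := i.isLt; omega⟩ *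
     Equiv.swap ⟨(i : ℕ) + 1, by have := i.isLt; omega⟩ ⟨n + i, by have := i.isLt; omega⟩) *
  highTw n i

/-!
Write the point `j` as `+j` and `n + j` as `-j`. The 4-cycle of `ρ_{L1}(σ_i)` is then the signed
quarter turn `±i ↦ ∓(i+1)`, `±(i+1) ↦ ±i`, and these quarter turns satisfy the braid relations. On
`{±i, ±(i+1)}` the antipode `±j ↦ ∓j` is the square of the quarter turn `c_i`, so
`ρ_{L2}(σ_i)` is the antipode times `c_i⁻¹`. Inverting a family and multiplying it by an
element commuting with it both preserve the braid relations. For transitivity, `ρ_{L2}(σ_i)`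
sends `±(i+1)` to `±i` and `±i` to `∓(i+1)`.
-/

/-- The braid relations of `B_n` for a family of elements of a group, where `f i` is the candidate
image of `σ i`. The commutation relation is only required for `i < j`, the other case being
symmetric. -/
structure SatisfiesBraidRelations {n : ℕ} {G : Type*} [Group G] (f : Fin (n - 1) → G) : Prop where
  commute : ∀ i j : Fin (n - 1), (i : ℕ) + 2 ≤ j → Commute (f i) (f j)
  braid : ∀ i j : Fin (n - 1), (j : ℕ) = i + 1 → f i * f j * f i = f j * f i * f j

namespace SatisfiesBraidRelations

variable {n : ℕ} {G : Type*} [Group G] {f : Fin (n - 1) → G}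

theorem lift_eq_one (hf : SatisfiesBraidRelations f) :
    ∀ r ∈ braidRels n, FreeGroup.lift f r = 1 := by
  rintro r (⟨i, j, hij, rfl⟩ | ⟨i, j, hij, rfl⟩)
  · have hcomm : Commute (f i) (f j) := hij.elim (hf.commute i j) fun h ↦ (hf.commute j i h).symm
    rw [map_mul, map_inv, mul_inv_eq_one]
    simpa only [map_mul, FreeGroup.lift_apply_of] using hcomm.eq
  · rw [map_mul, map_inv, mul_inv_eq_one]
    simpa only [map_mul, FreeGroup.lift_apply_of] using hf.braid i j hij

theorem inv (hf : SatisfiesBraidRelations f) : SatisfiesBraidRelations fun i ↦ (f i)⁻¹ where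
  commute i j hij := (hf.commute i j hij).inv_inv
  braid i j hij := by simpa [mul_assoc] using congrArg (·⁻¹) (hf.braid i j hij)

theorem mul_left_of_commute (hf : SatisfiesBraidRelations f) {z : G}
    (hz : ∀ i, Commute z (f i)) : SatisfiesBraidRelations fun i ↦ z * f i where
  commute i j hij :=
    ((Commute.refl z).mul_right (hz j)).mul_left ((hz i).symm.mul_right (hf.commute i j hij))
  braid i j hij := by
    have pull_out : ∀ k l, z * f k * (z * f l) * (z * f k) = z * z * z * (f k * f l * f k) := by
      intro k l
      rw [(hz k).symm.mul_mul_mul_comm, ((hz k).symm.mul_left (hz l).symm).mul_mul_mul_comm]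
    rw [pull_out, pull_out, hf.braid i j hij]

end SatisfiesBraidRelations

section FourCycle

variable {m : ℕ} {a b c d : Fin m}

theorem cyc4_apply_first (h : [a, b, c, d].Nodup) : cyc4 a b c d a = b := by
  grind [cyc4, Equiv.Perm.mul_apply]

theorem cyc4_apply_second (h : [a, b, c, d].Nodup) : cyc4 a b c d b = c := by
  grind [cyc4, Equiv.Perm.mul_apply]

theorem cyc4_apply_third (h : [a, b, c, d].Nodup) : cyc4 a b c d c = d := by
  grind [cyc4, Equiv.Perm.mul_apply]

theorem cyc4_apply_fourth (h : [a, b, c, d].Nodup) : cyc4 a b c d d = a := by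
  grind [cyc4, Equiv.Perm.mul_apply]

theorem cyc4_apply_of_notMem {x : Fin m} (h : x ∉ [a, b, c, d]) : cyc4 a b c d x = x := by
  grind [cyc4, Equiv.Perm.mul_apply]

end FourCycle

section SignedPoint

variable {n : ℕ}

/-- The point `j` of `Sym_{2n}` if `s = false` and the point `n + j` if `s = true`, thought of as
the signed points `+j` and `-j`. -/
def signedPoint (s : Bool) (j : Fin n) : Fin (2 * n) :=
  ⟨bif s then n + j else j, by cases s <;> simp <;> omega⟩

@[simp]
theorem signedPoint_inj {s t : Bool} {j k : Fin n} :
    signedPoint s j = signedPoint t k ↔ s = t ∧ j = k := by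
  have := j.isLt
  have := k.isLt
  cases s <;> cases t <;> simp [signedPoint, Fin.ext_iff] <;> omega

theorem exists_signedPoint_eq (x : Fin (2 * n)) : ∃ s j, signedPoint s j = x := by
  by_cases hx : (x : ℕ) < n
  · exact ⟨false, ⟨x, hx⟩, rfl⟩
  · exact ⟨true, ⟨x - n, by omega⟩, Fin.ext (Nat.add_sub_of_le (not_lt.mp hx))⟩

theorem perm_ext_signedPoint {f g : Equiv.Perm (Fin (2 * n))}
    (h : ∀ s j, f (signedPoint s j) = g (signedPoint s j)) : f = g := by
  ext1 x
  obtain ⟨s, j, rfl⟩ := exists_signedPoint_eq x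
  exact h s j

end SignedPoint

section ProductOfFlips

variable {n : ℕ}

theorem tw_signedPoint (k : Fin n) (s : Bool) (j : Fin n) :
    tw n k (signedPoint s j) = if j = k then signedPoint (!s) j else signedPoint s j := by
  change Equiv.swap (signedPoint false k) (signedPoint true k) _ = _
  rcases eq_or_ne j k with rfl | hjk
  · cases s <;> simp
  · rw [if_neg hjk, Equiv.swap_apply_of_ne_of_ne] <;> simp [hjk]

theorem prod_map_tw_signedPoint (p : Fin n → Prop) [DecidablePred p] {l : List (Fin n)}
    (hl : l.Nodup) (s : Bool) (j : Fin n) :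
    (l.map fun k ↦ if p k then tw n k else 1).prod (signedPoint s j) =
      if j ∈ l ∧ p j then signedPoint (!s) j else signedPoint s j := by
  induction l with
  | nil => simp
  | cons k l ih =>
    obtain ⟨hk, hl⟩ := List.nodup_cons.mp hl
    rw [List.map_cons, List.prod_cons, Equiv.Perm.mul_apply, ih hl]
    rcases eq_or_ne j k with rfl | hjk
    · by_cases hp : p j <;> simp [hk, hp, tw_signedPoint]
    · by_cases hp : p k <;> split_ifs <;> simp_all [tw_signedPoint]

theorem lowTw_signedPoint (i : Fin (n - 1)) (s : Bool) (j : Fin n) :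
    lowTw n i (signedPoint s j) =
      if (j : ℕ) < i then signedPoint (!s) j else signedPoint s j := by
  simp [lowTw, prod_map_tw_signedPoint (fun j : Fin n ↦ (j : ℕ) < i) (List.nodup_finRange n)]

theorem highTw_signedPoint (i : Fin (n - 1)) (s : Bool) (j : Fin n) :
    highTw n i (signedPoint s j) =
      if (i : ℕ) + 2 ≤ j then signedPoint (!s) j else signedPoint s j := by
  simp [highTw, prod_map_tw_signedPoint (fun j : Fin n ↦ (i : ℕ) + 2 ≤ j) (List.nodup_finRange n)]

/-- The central involution `±j ↦ ∓j` of the signed permutations, as the product of all the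
transpositions `(j, n+j)`. -/
def antipode (n : ℕ) : Equiv.Perm (Fin (2 * n)) :=
  ((List.finRange n).map (tw n)).prod

theorem antipode_signedPoint (s : Bool) (j : Fin n) :
    antipode n (signedPoint s j) = signedPoint (!s) j := by
  simpa [antipode] using prod_map_tw_signedPoint (fun _ ↦ True) (List.nodup_finRange n) s j

end ProductOfFlips

section QuarterTurn

variable {n : ℕ} {a b c d : Fin n}

/-- The signed quarter turn `±a ↦ ∓b`, `±b ↦ ±a`, generalizing the 4-cycle of
`ρ_{L1}(σ_i)` from adjacent points to arbitrary ones. -/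
def quarterTurn (a b : Fin n) : Equiv.Perm (Fin (2 * n)) :=
  cyc4 (signedPoint false a) (signedPoint true b) (signedPoint true a) (signedPoint false b)

theorem nodup_quarterTurn_cycle (hab : a ≠ b) :
    [signedPoint false a, signedPoint true b, signedPoint true a, signedPoint false b].Nodup := by
  simp [hab, hab.symm]

theorem quarterTurn_left (hab : a ≠ b) (s : Bool) :
    quarterTurn a b (signedPoint s a) = signedPoint (!s) b := by
  cases s
  · exact cyc4_apply_first (nodup_quarterTurn_cycle hab)
  · exact cyc4_apply_third (nodup_quarterTurn_cycle hab)

theorem quarterTurn_right (hab : a ≠ b) (s : Bool) :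
    quarterTurn a b (signedPoint s b) = signedPoint s a := by
  cases s
  · exact cyc4_apply_fourth (nodup_quarterTurn_cycle hab)
  · exact cyc4_apply_second (nodup_quarterTurn_cycle hab)

theorem quarterTurn_of_ne_of_ne (hca : c ≠ a) (hcb : c ≠ b) (s : Bool) :
    quarterTurn a b (signedPoint s c) = signedPoint s c :=
  cyc4_apply_of_notMem (by simp [hca, hcb])

theorem commute_antipode_quarterTurn (hab : a ≠ b) : Commute (antipode n) (quarterTurn a b) := by
  refine perm_ext_signedPoint fun s j ↦ ?_
  rcases eq_or_ne j a with rfl | hja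
  · simp [antipode_signedPoint, quarterTurn_left hab]
  rcases eq_or_ne j b with rfl | hjb
  · simp [antipode_signedPoint, quarterTurn_right hab]
  · simp [antipode_signedPoint, quarterTurn_of_ne_of_ne hja hjb]

theorem commute_quarterTurn (hab : a ≠ b) (hcd : c ≠ d) (hac : a ≠ c) (had : a ≠ d)
    (hbc : b ≠ c) (hbd : b ≠ d) : Commute (quarterTurn a b) (quarterTurn c d) := by
  refine perm_ext_signedPoint fun s j ↦ ?_
  by_cases hj : j = a ∨ j = b
  · rcases hj with rfl | rfl <;>
      simp [quarterTurn_left hab, quarterTurn_right hab, quarterTurn_of_ne_of_ne, hac, had, hbc,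
        hbd]
  obtain ⟨hja, hjb⟩ := not_or.mp hj
  by_cases hj' : j = c ∨ j = d
  · rcases hj' with rfl | rfl <;>
      simp [quarterTurn_left hcd, quarterTurn_right hcd, quarterTurn_of_ne_of_ne, hac.symm,
        had.symm, hbc.symm, hbd.symm]
  obtain ⟨hjc, hjd⟩ := not_or.mp hj'
  simp [quarterTurn_of_ne_of_ne hja hjb, quarterTurn_of_ne_of_ne hjc hjd]

theorem quarterTurn_braid (hab : a ≠ b) (hbc : b ≠ c) (hac : a ≠ c) :
    quarterTurn a b * quarterTurn b c * quarterTurn a b =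
      quarterTurn b c * quarterTurn a b * quarterTurn b c := by
  refine perm_ext_signedPoint fun s j ↦ ?_
  have ab_c := quarterTurn_of_ne_of_ne hac.symm hbc.symm
  have bc_a := quarterTurn_of_ne_of_ne hab hac
  by_cases hj : j = a ∨ j = b ∨ j = c
  · rcases hj with rfl | rfl | rfl <;>
      simp [quarterTurn_left hab, quarterTurn_right hab, quarterTurn_left hbc,
        quarterTurn_right hbc, ab_c, bc_a]
  · obtain ⟨hja, hjb, hjc⟩ := by simpa only [not_or] using hj
    simp [quarterTurn_of_ne_of_ne hja hjb, quarterTurn_of_ne_of_ne hjb hjc]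

end QuarterTurn

section Generators

variable {n : ℕ}

/-- The first of the two adjacent strands crossed by `σ i`, with strands numbered from `0`. -/
def leftStrand (i : Fin (n - 1)) : Fin n := ⟨i, by omega⟩

/-- The second of the two adjacent strands crossed by `σ i`, with strands numbered from `0`. -/
def rightStrand (i : Fin (n - 1)) : Fin n := ⟨i + 1, by omega⟩

theorem leftStrand_ne_rightStrand (i : Fin (n - 1)) : leftStrand i ≠ rightStrand i := by
  simp [leftStrand, rightStrand]

theorem linL1Gen_eq_quarterTurn (i : Fin (n - 1)) :
    linL1Gen n i = quarterTurn (leftStrand i) (rightStrand i) :=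
  rfl

theorem satisfiesBraidRelations_linL1Gen : SatisfiesBraidRelations (linL1Gen n) where
  commute i j hij := by
    rw [linL1Gen_eq_quarterTurn, linL1Gen_eq_quarterTurn]
    refine commute_quarterTurn (leftStrand_ne_rightStrand i) (leftStrand_ne_rightStrand j)
      ?_ ?_ ?_ ?_ <;> simp only [leftStrand, rightStrand, ne_eq, Fin.ext_iff] <;> omega
  braid i j hij := by
    have hright : rightStrand i = leftStrand j := Fin.ext hij.symm
    have hne : leftStrand i ≠ rightStrand j := by
      simp only [leftStrand, rightStrand, ne_eq, Fin.ext_iff]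
      omega
    rw [linL1Gen_eq_quarterTurn, linL1Gen_eq_quarterTurn, hright]
    exact quarterTurn_braid (hright ▸ leftStrand_ne_rightStrand i) (leftStrand_ne_rightStrand j) hne

theorem linL2Gen_eq_antipode_mul_inv (i : Fin (n - 1)) :
    linL2Gen n i = antipode n * (linL1Gen n i)⁻¹ := by
  have hne := leftStrand_ne_rightStrand i
  rw [eq_mul_inv_iff_mul_eq, linL2Gen, linL1Gen_eq_quarterTurn]
  refine perm_ext_signedPoint fun s j ↦ ?_
  simp only [Equiv.Perm.mul_apply, antipode_signedPoint]
  rcases eq_or_ne j (leftStrand i) with rfl | hleft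
  · rw [quarterTurn_left hne, highTw_signedPoint, if_neg (by simp [rightStrand]),
      quarterTurn_right hne, lowTw_signedPoint, if_neg (by simp [leftStrand])]
  rcases eq_or_ne j (rightStrand i) with rfl | hright
  · rw [quarterTurn_right hne, highTw_signedPoint, if_neg (by simp [leftStrand]),
      quarterTurn_left hne, lowTw_signedPoint, if_neg (by simp [rightStrand])]
  have hside : (j : ℕ) < i ∧ ¬ (i : ℕ) + 2 ≤ j ∨ ¬ (j : ℕ) < i ∧ (i : ℕ) + 2 ≤ j := by
    simp only [leftStrand, rightStrand, ne_eq, Fin.ext_iff] at hleft hright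
    omega
  rcases hside with ⟨hlow, hhigh⟩ | ⟨hlow, hhigh⟩ <;>
    simp [quarterTurn_of_ne_of_ne hleft hright, lowTw_signedPoint, highTw_signedPoint, hlow, hhigh]

theorem satisfiesBraidRelations_linL2Gen : SatisfiesBraidRelations (linL2Gen n) := by
  have hcomm (i : Fin (n - 1)) : Commute (antipode n) (linL1Gen n i)⁻¹ :=
    (commute_antipode_quarterTurn (leftStrand_ne_rightStrand i)).inv_right
  rw [funext linL2Gen_eq_antipode_mul_inv]
  exact satisfiesBraidRelations_linL1Gen.inv.mul_left_of_commute hcomm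

theorem linL2Gen_leftStrand (i : Fin (n - 1)) (s : Bool) :
    linL2Gen n i (signedPoint s (leftStrand i)) = signedPoint (!s) (rightStrand i) := by
  have hinv : (linL1Gen n i)⁻¹ (signedPoint s (leftStrand i)) = signedPoint s (rightStrand i) :=
    Equiv.Perm.inv_eq_iff_eq.mpr (quarterTurn_right (leftStrand_ne_rightStrand i) s).symm
  rw [linL2Gen_eq_antipode_mul_inv, Equiv.Perm.mul_apply, hinv, antipode_signedPoint]

theorem linL2Gen_rightStrand (i : Fin (n - 1)) (s : Bool) :
    linL2Gen n i (signedPoint s (rightStrand i)) = signedPoint s (leftStrand i) := by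
  have hinv : (linL1Gen n i)⁻¹ (signedPoint s (rightStrand i)) = signedPoint (!s) (leftStrand i) :=
    Equiv.Perm.inv_eq_iff_eq.mpr <| by
      rw [linL1Gen_eq_quarterTurn, quarterTurn_left (leftStrand_ne_rightStrand i), Bool.not_not]
  rw [linL2Gen_eq_antipode_mul_inv, Equiv.Perm.mul_apply, hinv, antipode_signedPoint, Bool.not_not]

end Generators

section Transitivity

theorem isTransitiveHom_of_isPretransitive_range {G : Type*} [Group G] {k : ℕ}
    {φ : G →* Equiv.Perm (Fin k)} (h : MulAction.IsPretransitive φ.range (Fin k)) :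
    IsTransitiveHom φ := by
  intro x y
  obtain ⟨⟨_, g, rfl⟩, hg⟩ := h.exists_smul_eq x y
  exact ⟨g, hg⟩

variable {n : ℕ} {H : Subgroup (Equiv.Perm (Fin (2 * n)))}

theorem signedPoint_rightStrand_mem_orbit {i : Fin (n - 1)} (hi : linL2Gen n i ∈ H)
    {x : Fin (2 * n)} {s : Bool} (hs : signedPoint s (leftStrand i) ∈ MulAction.orbit H x) :
    signedPoint (!s) (rightStrand i) ∈ MulAction.orbit H x := by
  rw [← linL2Gen_leftStrand]
  exact MulAction.mem_orbit_of_mem_orbit (⟨_, hi⟩ : H) hs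

theorem signedPoint_leftStrand_mem_orbit {i : Fin (n - 1)} (hi : linL2Gen n i ∈ H)
    {x : Fin (2 * n)} {s : Bool} (hs : signedPoint s (rightStrand i) ∈ MulAction.orbit H x) :
    signedPoint s (leftStrand i) ∈ MulAction.orbit H x := by
  rw [← linL2Gen_rightStrand]
  exact MulAction.mem_orbit_of_mem_orbit (⟨_, hi⟩ : H) hs

theorem signedPoint_mem_orbit (hn : 2 ≤ n) (hH : ∀ i, linL2Gen n i ∈ H) (s : Bool) (j : Fin n) :
    signedPoint s j ∈ MulAction.orbit H (signedPoint false (⟨0, by omega⟩ : Fin n)) := by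
  obtain ⟨k, hk⟩ := j
  induction k generalizing s with
  | zero =>
    cases s with
    | false => exact MulAction.mem_orbit_self _
    | true =>
      have hfirst : linL2Gen n ⟨0, by omega⟩ ∈ H := hH _
      exact signedPoint_leftStrand_mem_orbit hfirst <|
        signedPoint_rightStrand_mem_orbit hfirst (MulAction.mem_orbit_self _)
  | succ k ih =>
    have hnext := signedPoint_rightStrand_mem_orbit (hH ⟨k, by omega⟩) (ih (!s) (by omega))
    rwa [Bool.not_not] at hnext

theorem isPretransitive_of_linL2Gen_mem (hn : 2 ≤ n) (hH : ∀ i, linL2Gen n i ∈ H) :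
    MulAction.IsPretransitive H (Fin (2 * n)) := by
  refine (MulAction.isPretransitive_iff_base (signedPoint false ⟨0, by omega⟩)).mpr fun x ↦ ?_
  obtain ⟨s, j, rfl⟩ := exists_signedPoint_eq x
  exact signedPoint_mem_orbit hn hH s j

end Transitivity

theorem linL2_exists_and_transitive_general (n : ℕ) (hn : 2 ≤ n) :
    ∃ ρL2 : BraidGroup n →* Equiv.Perm (Fin (2 * n)),
      (∀ i : Fin (n - 1), ρL2 (σ i) = linL2Gen n i) ∧ IsTransitiveHom ρL2 := by
  have hrels := (satisfiesBraidRelations_linL2Gen (n := n)).lift_eq_one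
  have hgen (i : Fin (n - 1)) : PresentedGroup.toGroup hrels (σ i) = linL2Gen n i :=
    PresentedGroup.toGroup.of hrels
  refine ⟨PresentedGroup.toGroup hrels, hgen, isTransitiveHom_of_isPretransitive_range ?_⟩
  exact isPretransitive_of_linL2Gen_mem hn fun i ↦ ⟨σ i, hgen i⟩

/-- Lin. For `n ≥ 7`, the assignment
`σ_i ↦ ∏_{j=1}^{i-1}(j, n+j) · (i, n+i+1, n+i, i+1) · ∏_{j=i+2}^{n}(j, n+j)` induces a
well-defined group homomorphism `ρ_{L2} : B_n → Sym_{2n}`, and `ρ_{L2}` is transitive. -/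
theorem linL2_exists_and_transitive (n : ℕ) (hn : 7 ≤ n) :
    ∃ ρL2 : BraidGroup n →* Equiv.Perm (Fin (2 * n)),
      (∀ i : Fin (n - 1), ρL2 (σ i) = linL2Gen n i) ∧ IsTransitiveHom ρL2 := by
  exact linL2_exists_and_transitive_general n (by omega)
end

section
/- Let n ≥ 7. The assignment σ_i ↦ ∏_{j=1}^{i−1}(j, n+j) · (i, n+i+1)(i+1, n+i) · ∏_{j=i+2}^{n}(j, n+j), for 1 ≤ i ≤ n−1, induces a well-defined group homomorphism ρ_{L3} : B_n → Sym_{2n}, and ρ_{L3} is transitive. -/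
/-!
Arrange the `2n` points as the columns `{j, n + j}`. The two sheets are `{0, …, n-1}` and
`{n, …, 2n-1}`. Every `linL3Gen n i` exchanges the columns `i` and `i + 1` and moves every point to
the other sheet, so it is the image of `(i, i+1)` under the action of `Sym_n` on
`{0, …, n-1} × {±1}` by `τ (a, u) = (τ a, sign τ * u)`. Thus `ρ_{L3}` is this action composed with
`B_n → Sym_n`. The action is transitive because, once there are three letters, a permutation with
`τ a = b` can be chosen of either sign.
-/

open Equiv Equiv.Perm

section SignTwist

variable {α : Type*} [Fintype α] [DecidableEq α]

/-- The action of `Perm α` on two copies `α × {1}` and `α × {-1}` of `α` in which odd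
permutations interchange the copies. It is the action through which `ρ_{L3}` factors. -/
def signTwistHom (α : Type*) [Fintype α] [DecidableEq α] : Perm α →* Perm (α × ℤˣ) where
  toFun τ := prodCongr τ (Equiv.mulLeft (sign τ))
  map_one' := by ext <;> simp
  map_mul' τ π := by ext <;> simp [mul_assoc]

theorem signTwistHom_apply (τ : Perm α) (a : α) (u : ℤˣ) :
    signTwistHom α τ (a, u) = (τ a, sign τ * u) := rfl

theorem signTwistHom_swap_apply {a b : α} (hab : a ≠ b) (c : α) (u : ℤˣ) :
    signTwistHom α (swap a b) (c, u) = (swap a b c, -u) := by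
  rw [signTwistHom_apply, sign_swap hab, neg_one_mul]

theorem exists_perm_apply_eq_and_sign_eq (hα : 2 < Fintype.card α) (a b : α) (ε : ℤˣ) :
    ∃ τ : Perm α, τ a = b ∧ sign τ = ε := by
  by_cases hε : sign (swap a b) = ε
  · exact ⟨swap a b, swap_apply_left a b, hε⟩
  · have hcard : 1 < (Finset.univ.erase a).card := by
      rw [Finset.card_erase_of_mem (Finset.mem_univ a), Finset.card_univ]
      omega
    obtain ⟨c, hc, d, hd, hcd⟩ := Finset.one_lt_card.mp hcard
    refine ⟨swap a b * swap c d, ?_, ?_⟩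
    · rw [mul_apply, swap_apply_of_ne_of_ne (Finset.ne_of_mem_erase hc).symm
        (Finset.ne_of_mem_erase hd).symm, swap_apply_left]
    · rw [Perm.sign_mul, sign_swap hcd, mul_neg_one, ← Int.units_ne_iff_eq_neg.mp (Ne.symm hε)]

theorem exists_signTwistHom_apply_eq (hα : 2 < Fintype.card α) (p q : α × ℤˣ) :
    ∃ τ : Perm α, signTwistHom α τ p = q := by
  obtain ⟨a, u⟩ := p
  obtain ⟨b, v⟩ := q
  obtain ⟨τ, hτ, hsign⟩ := exists_perm_apply_eq_and_sign_eq hα a b (v * u⁻¹)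
  exact ⟨τ, by rw [signTwistHom_apply, hτ, hsign, inv_mul_cancel_right]⟩

end SignTwist

namespace BraidGroup

variable {n : ℕ} {G : Type*} [Group G]

/-- The homomorphism from `B_n` determined by images of the Artin generators that satisfy the
braid relations. -/
def lift (f : Fin (n - 1) → G)
    (hcomm : ∀ i j : Fin (n - 1), (i : ℕ) + 2 ≤ j → Commute (f i) (f j))
    (hbraid : ∀ i j : Fin (n - 1), (j : ℕ) = i + 1 → f i * f j * f i = f j * f i * f j) :
    BraidGroup n →* G :=
  PresentedGroup.toGroup (f := f) <| by
    rintro _ (⟨i, j, hij | hji, rfl⟩ | ⟨i, j, hij, rfl⟩) <;>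
      simp only [map_mul, map_inv, FreeGroup.lift_apply_of, mul_inv_eq_one]
    · exact hcomm i j hij
    · exact (hcomm j i hji).symm
    · exact hbraid i j hij

theorem lift_σ (f : Fin (n - 1) → G)
    (hcomm : ∀ i j : Fin (n - 1), (i : ℕ) + 2 ≤ j → Commute (f i) (f j))
    (hbraid : ∀ i j : Fin (n - 1), (j : ℕ) = i + 1 → f i * f j * f i = f j * f i * f j)
    (i : Fin (n - 1)) : lift f hcomm hbraid (σ i) = f i :=
  PresentedGroup.toGroup.of _

end BraidGroup

theorem swap_mul_swap_mul_swap_comm {α : Type*} [DecidableEq α] {a b c : α}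
    (hab : a ≠ b) (hbc : b ≠ c) (hac : a ≠ c) :
    swap a b * swap b c * swap a b = swap b c * swap a b * swap b c := by
  rw [swap_mul_swap_mul_swap hab hac, swap_comm a b, swap_comm b c,
    swap_mul_swap_mul_swap hbc.symm hac.symm, swap_comm]

/-- The adjacent transposition `(i, i+1)` (0-based) in `Sym_n`. -/
def adjSwap {n : ℕ} (i : Fin (n - 1)) : Perm (Fin n) :=
  swap ⟨i, by omega⟩ ⟨i + 1, by omega⟩

section AdjSwap

variable {n : ℕ}

theorem adjSwap_commute {i j : Fin (n - 1)} (hij : (i : ℕ) + 2 ≤ j) :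
    Commute (adjSwap i) (adjSwap j) := by
  refine (disjoint_swap_swap ?_).commute
  simp only [List.nodup_cons, List.mem_cons, List.not_mem_nil, List.nodup_nil, Fin.ext_iff,
    or_false, not_false_eq_true, and_true]
  omega

theorem adjSwap_braid {i j : Fin (n - 1)} (hij : (j : ℕ) = i + 1) :
    adjSwap i * adjSwap j * adjSwap i = adjSwap j * adjSwap i * adjSwap j := by
  simp only [adjSwap, hij]
  apply swap_mul_swap_mul_swap_comm <;> simp [Fin.ext_iff, add_assoc]

theorem mclosure_range_adjSwap (n : ℕ) :
    Submonoid.closure (Set.range (adjSwap : Fin (n - 1) → Perm (Fin n))) = ⊤ := by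
  cases n with
  | zero => exact Subsingleton.elim _ _
  | succ m => exact mclosure_swap_castSucc_succ m

end AdjSwap

namespace BraidGroup

/-- The canonical projection `B_n → Sym_n`, `σ_i ↦ (i, i+1)`. -/
def toPerm (n : ℕ) : BraidGroup n →* Perm (Fin n) :=
  lift adjSwap (fun _ _ => adjSwap_commute) (fun _ _ => adjSwap_braid)

theorem toPerm_σ {n : ℕ} (i : Fin (n - 1)) : toPerm n (σ i) = adjSwap i :=
  lift_σ ..

theorem toPerm_surjective (n : ℕ) : Function.Surjective (toPerm n) := by
  rw [← MonoidHom.mrange_eq_top, eq_top_iff, ← mclosure_range_adjSwap, Submonoid.closure_le]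
  rintro _ ⟨i, rfl⟩
  exact ⟨σ i, toPerm_σ i⟩

end BraidGroup

section Prod

variable {α β : Type*} [DecidableEq α]

theorem prodExtendRight_one (a : α) : prodExtendRight a (1 : Perm β) = 1 := by
  ext ⟨b, x⟩ : 1
  simp [prodExtendRight, eq_comm]

theorem prodExtendRight_swap [DecidableEq β] (a : α) (x y : β) :
    prodExtendRight a (swap x y) = swap (a, x) (a, y) := by
  ext ⟨b, z⟩ : 1
  obtain rfl | hba := eq_or_ne b a
  · rw [prodExtendRight_apply_eq]
    exact ((Prod.mk_right_injective b).swap_apply x y z).symm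
  · rw [prodExtendRight_apply_ne _ hba, swap_apply_of_ne_of_ne] <;> simp [hba]

theorem crossed_swaps_prod_apply {a b : α} (hab : a ≠ b) (c : α) (u : ℤˣ) :
    (swap (a, 1) (b, -1) * swap (b, 1) (a, -1) : Perm (α × ℤˣ)) (c, u) =
      (swap a b c, if c = a ∨ c = b then -u else u) := by
  obtain rfl | rfl := Int.units_eq_one_or u <;> obtain rfl | hca := eq_or_ne c a <;>
    obtain rfl | hcb := eq_or_ne c b <;> simp_all [swap_apply_def, eq_comm]

end Prod

/-- The identification of `ℤˣ` with `Fin 2` taking `(-1)^s` to `s`. -/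
def unitsIntEquivFinTwo : ℤˣ ≃ Fin 2 where
  toFun u := if u = 1 then 0 else 1
  invFun s := (-1) ^ (s : ℕ)
  left_inv := by decide
  right_inv := by decide

/-- The numbering of the two copies of `Fin n` by the points of `Sym_{2n}`: `(j, 1)` is the point
`j` and `(j, -1)` is the point `n + j`. -/
def sheetEquiv (n : ℕ) : Fin n × ℤˣ ≃ Fin (2 * n) :=
  (prodComm _ _).trans ((prodCongr unitsIntEquivFinTwo (Equiv.refl _)).trans finProdFinEquiv)

section SheetEquiv

variable {n : ℕ}

theorem sheetEquiv_one (j : Fin n) : sheetEquiv n (j, 1) = ⟨j, by omega⟩ := by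
  ext
  simp [sheetEquiv, unitsIntEquivFinTwo]

theorem sheetEquiv_neg_one (j : Fin n) : sheetEquiv n (j, -1) = ⟨n + j, by omega⟩ := by
  ext
  simp [sheetEquiv, unitsIntEquivFinTwo, add_comm]

theorem tw_eq_permCongrHom (j : Fin n) :
    tw n j = (sheetEquiv n).permCongrHom (prodExtendRight j (Equiv.neg ℤˣ)) := by
  have hneg : Equiv.neg ℤˣ = swap 1 (-1) := by decide
  rw [hneg, prodExtendRight_swap, permCongrHom_coe, permCongr_def, symm_trans_swap_trans,
    sheetEquiv_one, sheetEquiv_neg_one, tw]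

theorem prod_ite_tw_apply (p : Fin n → Prop) [DecidablePred p] (k : Fin n) (u : ℤˣ) :
    ((List.finRange n).map fun j => if p j then tw n j else 1).prod (sheetEquiv n (k, u)) =
      sheetEquiv n (k, if p k then -u else u) := by
  have hfactor (j : Fin n) : (if p j then tw n j else 1) = (sheetEquiv n).permCongrHom
      (prodExtendRight j (if p j then Equiv.neg ℤˣ else 1)) := by
    split_ifs
    · exact tw_eq_permCongrHom j
    · rw [prodExtendRight_one, map_one]
  have hprod : ((List.finRange n).map fun j => if p j then tw n j else 1).prod =
      (sheetEquiv n).permCongrHom (prodCongrRight fun j => if p j then Equiv.neg ℤˣ else 1) := by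
    rw [← prod_prodExtendRight _ (List.nodup_finRange n) List.mem_finRange, map_list_prod,
      List.map_map]
    exact congrArg _ (List.map_congr_left fun j _ => hfactor j)
  rw [hprod, permCongrHom_coe, permCongr_apply, symm_apply_apply, prodCongrRight_apply]
  split_ifs <;> rfl

theorem lowTw_sheetEquiv (i : Fin (n - 1)) (k : Fin n) (u : ℤˣ) :
    lowTw n i (sheetEquiv n (k, u)) = sheetEquiv n (k, if (k : ℕ) < i then -u else u) :=
  prod_ite_tw_apply (fun j => (j : ℕ) < i) k u

theorem highTw_sheetEquiv (i : Fin (n - 1)) (k : Fin n) (u : ℤˣ) :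
    highTw n i (sheetEquiv n (k, u)) = sheetEquiv n (k, if (i : ℕ) + 2 ≤ k then -u else u) :=
  prod_ite_tw_apply (fun j => (i : ℕ) + 2 ≤ j) k u

theorem crossed_swaps_sheetEquiv {a b : Fin n} (hab : a ≠ b) (k : Fin n) (u : ℤˣ) :
    (swap ⟨a, by omega⟩ ⟨n + b, by omega⟩ * swap ⟨b, by omega⟩ ⟨n + a, by omega⟩ :
        Perm (Fin (2 * n))) (sheetEquiv n (k, u)) =
      sheetEquiv n (swap a b k, if k = a ∨ k = b then -u else u) := by
  have hinj := (sheetEquiv n).injective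
  rw [← sheetEquiv_one, ← sheetEquiv_one, ← sheetEquiv_neg_one, ← sheetEquiv_neg_one, mul_apply,
    hinj.swap_apply, hinj.swap_apply, ← mul_apply, crossed_swaps_prod_apply hab]

theorem linL3Gen_sheetEquiv (i : Fin (n - 1)) (k : Fin n) (u : ℤˣ) :
    linL3Gen n i (sheetEquiv n (k, u)) = sheetEquiv n (adjSwap i k, -u) := by
  have hne : (⟨i, by omega⟩ : Fin n) ≠ ⟨i + 1, by omega⟩ := by simp
  rw [linL3Gen, mul_apply, mul_apply, highTw_sheetEquiv]
  refine (congrArg (lowTw n i) (crossed_swaps_sheetEquiv hne k _)).trans ?_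
  rw [lowTw_sheetEquiv, adjSwap]
  -- Exactly one of the three factors changes the sheet over the column `k`.
  by_cases hk : k = ⟨i, by omega⟩ ∨ k = ⟨i + 1, by omega⟩
  · obtain rfl | rfl := hk <;> simp
  · obtain ⟨hki, hki'⟩ := not_or.mp hk
    rw [if_neg hk, swap_apply_of_ne_of_ne hki hki']
    simp only [Fin.ext_iff] at hki hki'
    split_ifs <;> first | rfl | omega

theorem linL3Gen_eq_permCongrHom (i : Fin (n - 1)) :
    linL3Gen n i = (sheetEquiv n).permCongrHom (signTwistHom (Fin n) (adjSwap i)) := by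
  ext x : 1
  obtain ⟨⟨k, u⟩, rfl⟩ := (sheetEquiv n).surjective x
  rw [linL3Gen_sheetEquiv, permCongrHom_coe, permCongr_apply, symm_apply_apply, adjSwap,
    signTwistHom_swap_apply (by simp)]

end SheetEquiv

/-- The homomorphism `ρ_{L3}`, as the composite `B_n → Sym_n → Sym_{2n}` of the canonical
projection and the sign-twisted action on two copies of `Fin n`. -/
def linL3Hom (n : ℕ) : BraidGroup n →* Perm (Fin (2 * n)) :=
  (sheetEquiv n).permCongrHom.toMonoidHom.comp ((signTwistHom (Fin n)).comp (BraidGroup.toPerm n))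

theorem linL3Hom_apply_sheetEquiv {n : ℕ} (g : BraidGroup n) (p : Fin n × ℤˣ) :
    linL3Hom n g (sheetEquiv n p) =
      sheetEquiv n (signTwistHom (Fin n) (BraidGroup.toPerm n g) p) := by
  simp [linL3Hom]

theorem linL3Hom_σ {n : ℕ} (i : Fin (n - 1)) : linL3Hom n (σ i) = linL3Gen n i := by
  rw [linL3Gen_eq_permCongrHom, ← BraidGroup.toPerm_σ]
  rfl

theorem isTransitiveHom_linL3Hom {n : ℕ} (hn : 3 ≤ n) : IsTransitiveHom (linL3Hom n) := by
  intro x y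
  obtain ⟨p, rfl⟩ := (sheetEquiv n).surjective x
  obtain ⟨q, rfl⟩ := (sheetEquiv n).surjective y
  obtain ⟨τ, hτ⟩ := exists_signTwistHom_apply_eq (by rwa [Fintype.card_fin]) p q
  obtain ⟨g, rfl⟩ := BraidGroup.toPerm_surjective n τ
  exact ⟨g, by rw [linL3Hom_apply_sheetEquiv, hτ]⟩

theorem linL3_exists_and_transitive_general (n : ℕ) (hn : 3 ≤ n) :
    ∃ ρL3 : BraidGroup n →* Equiv.Perm (Fin (2 * n)),
      (∀ i : Fin (n - 1), ρL3 (σ i) = linL3Gen n i) ∧ IsTransitiveHom ρL3 :=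
  ⟨linL3Hom n, linL3Hom_σ, isTransitiveHom_linL3Hom hn⟩

/-- Lin. For `n ≥ 7`, the assignment
`σ_i ↦ ∏_{j=1}^{i-1}(j, n+j) · (i, n+i+1)(i+1, n+i) · ∏_{j=i+2}^{n}(j, n+j)` induces a
well-defined group homomorphism `ρ_{L3} : B_n → Sym_{2n}`, and `ρ_{L3}` is transitive. -/
theorem linL3_exists_and_transitive (n : ℕ) (hn : 7 ≤ n) :
    ∃ ρL3 : BraidGroup n →* Equiv.Perm (Fin (2 * n)),
      (∀ i : Fin (n - 1), ρL3 (σ i) = linL3Gen n i) ∧ IsTransitiveHom ρL3 :=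
  linL3_exists_and_transitive_general n (by omega)
end
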